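/- (Proposition 5, double reinforcement paradox probability under IAC, complete ballots.) The IAC probability, over complete-ballot profiles with total 1, of the event that both a runner-up reinforcement paradox and a plurality loser reinforcement paradox occur — i.e., some candidate whose first-place total is not strictly smallest demonstrates a reinforcement paradox, and the candidate whose first-place total is strictly smallest also demonstrates a reinforcement paradox — equals 31/768. -/

import Mathlib

/-- A three-candidate complete-ballot profile: numbers of ballots with rankings
A≻B≻C, A≻C≻B, B≻A≻C, B≻C≻A, C≻A≻B, C≻B≻A respectively. -/
structure Profile where
  x1 : ℝ
  x2 : ℝ
  y1 : ℝ
  y2 : ℝ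
  z1 : ℝ
  z2 : ℝ

namespace Profile

def nonneg (p : Profile) : Prop :=
  0 ≤ p.x1 ∧ 0 ≤ p.x2 ∧ 0 ≤ p.y1 ∧ 0 ≤ p.y2 ∧ 0 ≤ p.z1 ∧ 0 ≤ p.z2

instance : Add Profile :=
  ⟨fun p q => ⟨p.x1 + q.x1, p.x2 + q.x2, p.y1 + q.y1, p.y2 + q.y2, p.z1 + q.z1, p.z2 + q.z2⟩⟩

/-- First-place total of candidate A. -/
def X (p : Profile) : ℝ := p.x1 + p.x2
/-- First-place total of candidate B. -/
def Y (p : Profile) : ℝ := p.y1 + p.y2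
/-- First-place total of candidate C. -/
def Z (p : Profile) : ℝ := p.z1 + p.z2
/-- Total vote. -/
def V (p : Profile) : ℝ := p.X + p.Y + p.Z

end Profile

inductive Cand | A | B | C

/-- Candidate `W` wins strictly under IRV in profile `p`. -/
def wins : Cand → Profile → Prop
  | Cand.A, p => p.X > p.Y + p.Z ∨
      (p.Z < p.X ∧ p.Z < p.Y ∧ p.X + p.z1 > p.Y + p.z2) ∨
      (p.Y < p.X ∧ p.Y < p.Z ∧ p.X + p.y1 > p.Z + p.y2)
  | Cand.B, p => p.Y > p.X + p.Z ∨
      (p.Z < p.Y ∧ p.Z < p.X ∧ p.Y + p.z2 > p.X + p.z1) ∨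
      (p.X < p.Y ∧ p.X < p.Z ∧ p.Y + p.x1 > p.Z + p.x2)
  | Cand.C, p => p.Z > p.X + p.Y ∨
      (p.X < p.Z ∧ p.X < p.Y ∧ p.Z + p.x2 > p.Y + p.x1) ∨
      (p.Y < p.Z ∧ p.Y < p.X ∧ p.Z + p.y2 > p.X + p.y1)

/-- Profile `p` demonstrates a reinforcement paradox for candidate `W`: there is a
partition `p = p1 + p2` into profiles with nonnegative entries such that `W` wins
strictly in both `p1` and `p2` but `W` does not win strictly in `p`. -/
def paradox (W : Cand) (p : Profile) : Prop :=
  ∃ p1 p2 : Profile, p1.nonneg ∧ p2.nonneg ∧ p1 + p2 = p ∧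
    wins W p1 ∧ wins W p2 ∧ ¬ wins W p

/-- The simplex of complete-ballot profiles with total 1, parameterized by the
first five coordinates (X1, X2, Y1, Y2, Z1). -/
def T : Set (Fin 5 → ℝ) :=
  {v | (∀ i, 0 ≤ v i) ∧ v 0 + v 1 + v 2 + v 3 + v 4 ≤ 1}

/-- The profile with total 1 associated to a point of `T`, with
`Z2 = 1 - (X1 + X2 + Y1 + Y2 + Z1)`. -/
noncomputable def profOf (v : Fin 5 → ℝ) : Profile :=
  ⟨v 0, v 1, v 2, v 3, v 4, 1 - (v 0 + v 1 + v 2 + v 3 + v 4)⟩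

/-- First-place total of a candidate. -/
def fp : Cand → Profile → ℝ
  | Cand.A, p => p.X
  | Cand.B, p => p.Y
  | Cand.C, p => p.Z

/-- Candidate `W`'s first-place total is strictly smallest among the three. -/
def strictlySmallest (W : Cand) (p : Profile) : Prop :=
  ∀ W' : Cand, W' ≠ W → fp W p < fp W' p

namespace Profile

/-- Exchange the names of candidates A and B. -/
def swapAB (p : Profile) : Profile := ⟨p.y1, p.y2, p.x1, p.x2, p.z2, p.z1⟩
/-- Exchange the names of candidates A and C. -/
def swapAC (p : Profile) : Profile := ⟨p.z2, p.z1, p.y2, p.y1, p.x2, p.x1⟩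
/-- Exchange the names of candidates B and C. -/
def swapBC (p : Profile) : Profile := ⟨p.x2, p.x1, p.z1, p.z2, p.y1, p.y2⟩

end Profile

open Profile

/-- The same exchanges on candidates. -/
def cAB : Cand → Cand
  | Cand.A => Cand.B | Cand.B => Cand.A | Cand.C => Cand.C
def cAC : Cand → Cand
  | Cand.A => Cand.C | Cand.B => Cand.B | Cand.C => Cand.A
def cBC : Cand → Cand
  | Cand.A => Cand.A | Cand.B => Cand.C | Cand.C => Cand.B

/-- A renaming of candidates: a pair of involutions, compatible with everything. -/
structure Renaming (c : Cand → Cand) (f : Profile → Profile) : Prop where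
  cc : ∀ W, c (c W) = W
  ff : ∀ p, f (f p) = p
  fadd : ∀ p q, f (p + q) = f p + f q
  fnonneg : ∀ p, p.nonneg → (f p).nonneg
  ffp : ∀ W p, fp (c W) (f p) = fp W p
  fwins : ∀ W p, wins W p → wins (c W) (f p)

theorem profile_add (p q : Profile) : p + q =
    ⟨p.x1 + q.x1, p.x2 + q.x2, p.y1 + q.y1, p.y2 + q.y2, p.z1 + q.z1, p.z2 + q.z2⟩ := rfl

theorem renAB : Renaming cAB swapAB where
  cc := by rintro (_ | _ | _) <;> rfl
  ff := fun p => rfl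
  fadd := fun p q => rfl
  fnonneg := by rintro p ⟨h1, h2, h3, h4, h5, h6⟩; exact ⟨h3, h4, h1, h2, h6, h5⟩
  ffp := by
    rintro (_ | _ | _) p <;> simp only [cAB, swapAB, fp, X, Y, Z] <;> ring
  fwins := by
    rintro (_ | _ | _) p <;> simp only [cAB, swapAB, wins, X, Y, Z] <;> rintro (h | ⟨h, h', h''⟩ | ⟨h, h', h''⟩) <;>
    first
    | (left; linarith)
    | (right; left; exact ⟨by linarith, by linarith, by linarith⟩)
    | (right; right; exact ⟨by linarith, by linarith, by linarith⟩)

theorem renAC : Renaming cAC swapAC where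
  cc := by rintro (_ | _ | _) <;> rfl
  ff := fun p => rfl
  fadd := fun p q => rfl
  fnonneg := by rintro p ⟨h1, h2, h3, h4, h5, h6⟩; exact ⟨h6, h5, h4, h3, h2, h1⟩
  ffp := by
    rintro (_ | _ | _) p <;> simp only [cAC, swapAC, fp, X, Y, Z] <;> ring
  fwins := by
    rintro (_ | _ | _) p <;> simp only [cAC, swapAC, wins, X, Y, Z] <;> rintro (h | ⟨h, h', h''⟩ | ⟨h, h', h''⟩) <;>
    first
    | (left; linarith)
    | (right; left; exact ⟨by linarith, by linarith, by linarith⟩)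
    | (right; right; exact ⟨by linarith, by linarith, by linarith⟩)

theorem renBC : Renaming cBC swapBC where
  cc := by rintro (_ | _ | _) <;> rfl
  ff := fun p => rfl
  fadd := fun p q => rfl
  fnonneg := by rintro p ⟨h1, h2, h3, h4, h5, h6⟩; exact ⟨h2, h1, h5, h6, h3, h4⟩
  ffp := by
    rintro (_ | _ | _) p <;> simp only [cBC, swapBC, fp, X, Y, Z] <;> ring
  fwins := by
    rintro (_ | _ | _) p <;> simp only [cBC, swapBC, wins, X, Y, Z] <;> rintro (h | ⟨h, h', h''⟩ | ⟨h, h', h''⟩) <;>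
    first
    | (left; linarith)
    | (right; left; exact ⟨by linarith, by linarith, by linarith⟩)
    | (right; right; exact ⟨by linarith, by linarith, by linarith⟩)

theorem Renaming.wins_iff {c f} (r : Renaming c f) (W : Cand) (p : Profile) :
    wins (c W) (f p) ↔ wins W p :=
  ⟨fun h => by simpa [r.cc, r.ff] using r.fwins _ _ h, r.fwins W p⟩

theorem Renaming.paradox_mp {c f} (r : Renaming c f) (W : Cand) (p : Profile)
    (h : paradox W p) : paradox (c W) (f p) := by
  obtain ⟨p1, p2, h1, h2, h3, h4, h5, h6⟩ := h
  exact ⟨f p1, f p2, r.fnonneg _ h1, r.fnonneg _ h2, by rw [← r.fadd, h3], r.fwins _ _ h4,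
    r.fwins _ _ h5, by rwa [r.wins_iff]⟩

theorem Renaming.paradox_iff {c f} (r : Renaming c f) (W : Cand) (p : Profile) :
    paradox (c W) (f p) ↔ paradox W p :=
  ⟨fun h => by simpa [r.cc, r.ff] using r.paradox_mp _ _ h, r.paradox_mp W p⟩

theorem Renaming.ss_mp {c f} (r : Renaming c f) (W : Cand) (p : Profile)
    (h : strictlySmallest W p) : strictlySmallest (c W) (f p) := by
  intro W' hW'
  have := h (c W') (by rintro rfl; exact hW' (r.cc _).symm)
  rw [← r.ffp, ← r.ffp (c W'), r.cc] at this
  exact this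

theorem Renaming.ss_iff {c f} (r : Renaming c f) (W : Cand) (p : Profile) :
    strictlySmallest (c W) (f p) ↔ strictlySmallest W p :=
  ⟨fun h => by simpa [r.cc, r.ff] using r.ss_mp _ _ h, r.ss_mp W p⟩

/-- The double paradox event. -/
def Dbl (p : Profile) : Prop :=
  (∃ W : Cand, ¬ strictlySmallest W p ∧ paradox W p) ∧
    (∃ W : Cand, strictlySmallest W p ∧ paradox W p)

theorem Renaming.dbl_mp {c f} (r : Renaming c f) (p : Profile) (h : Dbl p) : Dbl (f p) := by
  obtain ⟨⟨W, h1, h2⟩, ⟨W', h3, h4⟩⟩ := h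
  exact ⟨⟨c W, by rwa [r.ss_iff], r.paradox_mp _ _ h2⟩, ⟨c W', r.ss_mp _ _ h3, r.paradox_mp _ _ h4⟩⟩

theorem Renaming.dbl_iff {c f} (r : Renaming c f) (p : Profile) : Dbl (f p) ↔ Dbl p :=
  ⟨fun h => by simpa [r.ff] using r.dbl_mp _ h, r.dbl_mp p⟩

/-- The paradox for the plurality loser `C`. -/
theorem paradox_C_iff (p : Profile) (hp : p.nonneg) (hX : p.Z < p.X) (hY : p.Z < p.Y) :
    paradox Cand.C p ↔ (p.Y - p.Z < p.x2 ∧ p.X - p.Z < p.y2 ∧ p.X + p.Y < 3 * p.Z ∧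
      p.X + p.Y - p.Z < 2 * (p.x2 + p.y2)) := by
  constructor
  · rintro ⟨q, r, ⟨q1, q2, q3, q4, q5, q6⟩, ⟨r1, r2, r3, r4, r5, r6⟩, rfl, hq, hr, -⟩
    simp only [profile_add, X, Y, Z] at hX hY
    simp only [wins, X, Y, Z] at hq hr
    simp only [profile_add, X, Y, Z]
    rcases hq with h | ⟨h, h', h''⟩ | ⟨h, h', h''⟩ <;>
    rcases hr with k | ⟨k, k', k''⟩ | ⟨k, k', k''⟩ <;>
    first
    | (exfalso; linarith)
    | exact ⟨by linarith, by linarith, by linarith, by linarith⟩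
  · rintro ⟨h1, h2, h3, h4⟩
    obtain ⟨x1, x2, y1, y2, z1, z2⟩ := p
    obtain ⟨p1, p2, p3, p4, p5, p6⟩ := hp
    simp only [X, Y, Z] at *
    set c := (x1 + x2 + (y1 + y2) - (z1 + z2)) / 2 with hc
    set la := (y1 + y2) - (z1 + z2) with hla
    set lb := (x1 + x2) - (z1 + z2) with hlb
    obtain ⟨σ, hσ1, hσ2⟩ : ∃ σ, max c (la + lb) < σ ∧ σ < min (z1 + z2) (x2 + y2) :=
      exists_between (max_lt (lt_min (by linarith) (by linarith)) (lt_min (by linarith) (by linarith)))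
    obtain ⟨hσ1, hσ3⟩ := max_lt_iff.1 hσ1
    obtain ⟨hσ2, hσ4⟩ := lt_min_iff.1 hσ2
    obtain ⟨a, b, ha, ha', hb, hb', hab⟩ : ∃ a b, la < a ∧ a ≤ x2 ∧ lb < b ∧ b ≤ y2 ∧ a + b = σ := by
      have hd : 0 < x2 + y2 - la - lb := by linarith
      set t := (σ - la - lb) / (x2 + y2 - la - lb) with ht
      have ht0 : 0 < t := div_pos (by linarith) hd
      have ht1 : t < 1 := by rw [ht, div_lt_one hd]; linarith
      have ht2 : t * (x2 + y2 - la - lb) = σ - la - lb := div_mul_cancel₀ _ hd.ne'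
      refine ⟨la + t * (x2 - la), lb + t * (y2 - lb), ?_, ?_, ?_, ?_, ?_⟩ <;> nlinarith
    obtain ⟨ζ, hz1, hz2⟩ : ∃ ζ, max a (y1 + y2 - σ) < ζ ∧ ζ < (z1 + z2) - max b (x1 + x2 - σ) := by
      apply exists_between
      rcases max_cases a (y1 + y2 - σ) with ⟨h, -⟩ | ⟨h, -⟩ <;>
      rcases max_cases b (x1 + x2 - σ) with ⟨h', -⟩ | ⟨h', -⟩ <;> rw [h, h'] <;> linarith
    obtain ⟨hz1, hz3⟩ := max_lt_iff.1 hz1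
    have hz4 : max b (x1 + x2 - σ) < z1 + z2 - ζ := by linarith
    obtain ⟨hz4, hz5⟩ := max_lt_iff.1 hz4
    obtain ⟨e1, e2, he1, he1', he2, he2', he⟩ :
        ∃ e1 e2, 0 ≤ e1 ∧ e1 ≤ z1 ∧ 0 ≤ e2 ∧ e2 ≤ z2 ∧ e1 + e2 = ζ := by
      rcases le_total ζ z1 with h | h
      · exact ⟨ζ, 0, by linarith, h, le_rfl, p6, by ring⟩
      · exact ⟨z1, ζ - z1, p5, le_rfl, by linarith, by linarith, by ring⟩
    refine ⟨⟨0, a, y1, y2 - b, e1, e2⟩, ⟨x1, x2 - a, 0, b, z1 - e1, z2 - e2⟩, ?_, ?_, ?_, ?_, ?_, ?_⟩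
    · refine ⟨?_, ?_, ?_, ?_, ?_, ?_⟩ <;> simp only <;> linarith
    · refine ⟨?_, ?_, ?_, ?_, ?_, ?_⟩ <;> simp only <;> linarith
    · simp [profile_add]
    · right; left
      simp only [X, Y, Z]
      exact ⟨by linarith, by linarith, by linarith⟩
    · right; right
      simp only [X, Y, Z]
      exact ⟨by linarith, by linarith, by linarith⟩
    · simp only [wins, X, Y, Z]
      rintro (h | ⟨h, h', h''⟩ | ⟨h, h', h''⟩) <;> linarith

/-- The paradox for the candidate `B` when `C` is the plurality loser. -/
theorem paradox_B_iff (p : Profile) (hp : p.nonneg) (hX : p.Z < p.X) (hY : p.Z < p.Y) :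
    paradox Cand.B p ↔ (p.Y ≤ p.X + p.Z ∧ p.Y + p.z2 ≤ p.X + p.z1 ∧ p.X - p.Y < p.z2 ∧
      p.X + p.z1 - p.Y - p.z2 < 2 * p.x1) := by
  constructor
  · rintro ⟨q, r, ⟨q1, q2, q3, q4, q5, q6⟩, ⟨r1, r2, r3, r4, r5, r6⟩, rfl, hq, hr, hn⟩
    have hn1 : (q + r).Y ≤ (q + r).X + (q + r).Z := by
      by_contra! h; exact hn (Or.inl h)
    have hn2 : (q + r).Y + (q + r).z2 ≤ (q + r).X + (q + r).z1 := by
      by_contra! h; exact hn (Or.inr (Or.inl ⟨hY, hX, h⟩))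
    refine ⟨hn1, hn2, ?_⟩
    simp only [profile_add, X, Y, Z] at hX hY hn1 hn2
    simp only [wins, X, Y, Z] at hq hr
    simp only [profile_add, X, Y, Z]
    rcases hq with h | ⟨h, h', h''⟩ | ⟨h, h', h''⟩ <;>
    rcases hr with k | ⟨k, k', k''⟩ | ⟨k, k', k''⟩ <;>
    first
    | (exfalso; linarith)
    | exact ⟨by linarith, by linarith⟩
  · rintro ⟨h1, h2, h3, h4⟩
    obtain ⟨x1, x2, y1, y2, z1, z2⟩ := p
    obtain ⟨p1, p2, p3, p4, p5, p6⟩ := hp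
    simp only [X, Y, Z] at *
    set m := x1 + x2 + z1 - (y1 + y2) - z2 with hm
    obtain ⟨a, ha, ha'⟩ : ∃ a, m / 2 < a ∧ a < min x1 z1 :=
      exists_between (lt_min (by linarith) (by linarith))
    obtain ⟨ha1, ha2⟩ := lt_min_iff.1 ha'
    obtain ⟨η, hη, hη'⟩ : ∃ η, max a (z1 - a) < η ∧ η < min z1 (a + z1 - m) :=
      exists_between (max_lt (lt_min (by linarith) (by linarith)) (lt_min (by linarith) (by linarith)))
    obtain ⟨hη1, hη2⟩ := max_lt_iff.1 hη
    obtain ⟨hη3, hη4⟩ := lt_min_iff.1 hη'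
    obtain ⟨e1, e2, he1, he1', he2, he2', he⟩ :
        ∃ e1 e2, 0 ≤ e1 ∧ e1 ≤ y1 ∧ 0 ≤ e2 ∧ e2 ≤ y2 ∧ e1 + e2 = η := by
      rcases le_total η y1 with h | h
      · exact ⟨η, 0, by linarith, h, le_rfl, p4, by ring⟩
      · exact ⟨y1, η - y1, p3, le_rfl, by linarith, by linarith, by ring⟩
    refine ⟨⟨a, 0, e1, e2, z1, 0⟩, ⟨x1 - a, x2, y1 - e1, y2 - e2, 0, z2⟩, ?_, ?_, ?_, ?_, ?_, ?_⟩
    · refine ⟨?_, ?_, ?_, ?_, ?_, ?_⟩ <;> simp only <;> linarith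
    · refine ⟨?_, ?_, ?_, ?_, ?_, ?_⟩ <;> simp only <;> linarith
    · simp [profile_add]
    · right; right
      simp only [X, Y, Z]
      exact ⟨by linarith, by linarith, by linarith⟩
    · right; left
      simp only [X, Y, Z]
      exact ⟨by linarith, by linarith, by linarith⟩
    · simp only [wins, X, Y, Z]
      rintro (h | ⟨h, h', h''⟩ | ⟨h, h', h''⟩) <;> linarith

/-- The linear description of one sixth of the event: `C` is the plurality loser, and
`A` beats `B`. -/
def Q (p : Profile) : Prop :=
  p.nonneg ∧ p.Z < p.X ∧ p.Z < p.Y ∧ p.Y - p.Z < p.x2 ∧ p.X - p.Z < p.y2 ∧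
    p.X + p.Y < 3 * p.Z ∧ p.X + p.Y - p.Z < 2 * (p.x2 + p.y2) ∧
    p.Y + p.z2 < p.X + p.z1 ∧
    p.X - p.Y < p.z2 ∧ p.X + p.z1 - p.Y - p.z2 < 2 * p.x1

/-- The part of the event where `C` is the plurality loser (up to ties). -/
def G (p : Profile) : Prop := Q p ∨ Q p.swapAB

/-- `A` and `B` are tied in the pairwise comparison. -/
def tie (p : Profile) : Prop := p.Y + p.z2 = p.X + p.z1

theorem G_mp (p : Profile) : G p → p.nonneg ∧ strictlySmallest Cand.C p ∧ Dbl p := by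
  have key : ∀ q : Profile, Q q → q.nonneg ∧ strictlySmallest Cand.C q ∧ Dbl q := by
    rintro p ⟨hp, hX, hY, h1, h2, h3, h4, h5, h6, h7⟩
    have sC : strictlySmallest Cand.C p := by
      rintro (_ | _ | _) h
      exacts [hX, hY, absurd rfl h]
    have sB : ¬ strictlySmallest Cand.B p := fun h => absurd (h Cand.C (by simp)) (not_lt.2 hY.le)
    refine ⟨hp, sC, ⟨Cand.B, sB, ?_⟩, ⟨Cand.C, sC, ?_⟩⟩
    · rw [paradox_B_iff p hp hX hY]
      exact ⟨by linarith, h5.le, h6, h7⟩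
    · rw [paradox_C_iff p hp hX hY]
      exact ⟨h1, h2, h3, h4⟩
  rintro (h | h)
  · exact key p h
  · obtain ⟨h1, h2, h3⟩ := key _ h
    exact ⟨renAB.fnonneg _ h1, (renAB.ss_iff Cand.C p).1 h2, (renAB.dbl_iff p).1 h3⟩

theorem G_mpr (p : Profile) (hp : p.nonneg) (hs : strictlySmallest Cand.C p) (hd : Dbl p)
    (ht : ¬ tie p) : G p := by
  have hX : p.Z < p.X := hs Cand.A (by simp)
  have hY : p.Z < p.Y := hs Cand.B (by simp)
  have hC : paradox Cand.C p := by
    obtain ⟨W, h1, h2⟩ := hd.2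
    cases W
    · exact absurd (h1 Cand.C (by simp)) (not_lt.2 hX.le)
    · exact absurd (h1 Cand.C (by simp)) (not_lt.2 hY.le)
    · exact h2
  have key : ∀ q : Profile, q.nonneg → strictlySmallest Cand.C q → paradox Cand.C q → ¬ tie q →
      paradox Cand.B q → Q q := by
    intro p hp hs hC ht hB
    have hX : p.Z < p.X := hs Cand.A (by simp)
    have hY : p.Z < p.Y := hs Cand.B (by simp)
    rw [paradox_B_iff p hp hX hY] at hB
    rw [paradox_C_iff p hp hX hY] at hC
    obtain ⟨h1, h2, h3, h4⟩ := hC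
    obtain ⟨h0, h5, h6, h7⟩ := hB
    exact ⟨hp, hX, hY, h1, h2, h3, h4, lt_of_le_of_ne h5 ht, h6, h7⟩
  obtain ⟨W, h1, h2⟩ := hd.1
  cases W
  · right
    refine key _ (renAB.fnonneg _ hp) (renAB.ss_mp _ _ hs) (renAB.paradox_mp _ _ hC) ?_
      (renAB.paradox_mp _ _ h2)
    intro h
    exact ht h.symm
  · left
    exact key p hp hs hC ht h2
  · exact absurd hs h1

theorem dbl_mpr (p : Profile) (h : G p ∨ G p.swapAC ∨ G p.swapBC) : p.nonneg ∧ Dbl p := by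
  rcases h with h | h | h
  · have := G_mp _ h
    exact ⟨this.1, this.2.2⟩
  · have := G_mp _ h
    exact ⟨renAC.fnonneg _ this.1, (renAC.dbl_iff p).1 this.2.2⟩
  · have := G_mp _ h
    exact ⟨renBC.fnonneg _ this.1, (renBC.dbl_iff p).1 this.2.2⟩

theorem dbl_mp (p : Profile) (hp : p.nonneg) (hd : Dbl p) (h1 : ¬ tie p) (h2 : ¬ tie p.swapAC)
    (h3 : ¬ tie p.swapBC) : G p ∨ G p.swapAC ∨ G p.swapBC := by
  obtain ⟨W, hW, -⟩ := hd.2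
  cases W
  · right; left
    exact G_mpr _ (renAC.fnonneg _ hp) (renAC.ss_mp _ _ hW) (renAC.dbl_mp _ hd) h2
  · right; right
    exact G_mpr _ (renBC.fnonneg _ hp) (renBC.ss_mp _ _ hW) (renBC.dbl_mp _ hd) h3
  · left
    exact G_mpr _ hp hW hd h1

/-- Disjointness of the pieces. -/
theorem G_disj (p : Profile) : ¬ (G p ∧ G p.swapAC) ∧ ¬ (G p ∧ G p.swapBC) ∧
    ¬ (G p.swapAC ∧ G p.swapBC) := by
  have s1 : strictlySmallest Cand.C p.swapAC ↔ strictlySmallest Cand.A p := renAC.ss_iff Cand.A p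
  have s2 : strictlySmallest Cand.C p.swapBC ↔ strictlySmallest Cand.B p := renBC.ss_iff Cand.B p
  refine ⟨?_, ?_, ?_⟩
  · rintro ⟨h1, h2⟩
    exact lt_asymm ((G_mp _ h1).2.1 Cand.A (by simp)) (s1.1 (G_mp _ h2).2.1 Cand.C (by simp))
  · rintro ⟨h1, h2⟩
    exact lt_asymm ((G_mp _ h1).2.1 Cand.B (by simp)) (s2.1 (G_mp _ h2).2.1 Cand.C (by simp))
  · rintro ⟨h1, h2⟩
    exact lt_asymm (s1.1 (G_mp _ h1).2.1 Cand.B (by simp)) (s2.1 (G_mp _ h2).2.1 Cand.A (by simp))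

theorem Q_disj (p : Profile) : ¬ (Q p ∧ Q p.swapAB) := by
  rintro ⟨⟨-, -, -, -, -, -, -, h, -⟩, ⟨-, -, -, -, -, -, -, h', -⟩⟩
  simp only [swapAB, X, Y] at h h'
  linarith

section volumes

open MeasureTheory

theorem vol_cons {n : ℕ} (S : Set (Fin (n + 1) → ℝ)) (hS : MeasurableSet S) :
    volume S = ∫⁻ x : ℝ, volume {v : Fin n → ℝ | (Fin.cons x v : Fin (n + 1) → ℝ) ∈ S} := by
  have h := (volume_preserving_piFinSuccAbove (fun _ : Fin (n + 1) => ℝ) 0).symm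
  rw [← h.measure_preimage hS.nullMeasurableSet, Measure.volume_eq_prod,
    Measure.prod_apply (h.measurable hS)]
  have e : ∀ (x : ℝ) (v : Fin n → ℝ), (Fin.insertNthEquiv (fun _ : Fin (n + 1) => ℝ) 0) (x, v) =
      (Fin.cons x v : Fin (n + 1) → ℝ) := fun x v => Fin.insertNth_zero' x v
  simp only [Set.preimage, Set.mem_ofPred_eq, MeasurableEquiv.piFinSuccAbove_symm_apply, e]

theorem vol_cons_symm {n : ℕ} (S : Set (Fin (n + 1) → ℝ)) (hS : MeasurableSet S) :
    volume S = ∫⁻ v : Fin n → ℝ, volume {x : ℝ | (Fin.cons x v : Fin (n + 1) → ℝ) ∈ S} := by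
  have h := (volume_preserving_piFinSuccAbove (fun _ : Fin (n + 1) => ℝ) 0).symm
  rw [← h.measure_preimage hS.nullMeasurableSet, Measure.volume_eq_prod,
    Measure.prod_apply_symm (h.measurable hS)]
  have e : ∀ (x : ℝ) (v : Fin n → ℝ), (Fin.insertNthEquiv (fun _ : Fin (n + 1) => ℝ) 0) (x, v) =
      (Fin.cons x v : Fin (n + 1) → ℝ) := fun x v => Fin.insertNth_zero' x v
  simp only [Set.preimage, Set.mem_ofPred_eq, MeasurableEquiv.piFinSuccAbove_symm_apply, e]

theorem tie_null : volume {v : Fin 5 → ℝ | v 0 + v 1 + v 4 = 1 / 2} = 0 := by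
  rw [vol_cons_symm _ (measurableSet_eq_fun (by fun_prop) (by fun_prop))]
  rw [lintegral_eq_zero_iff']
  · refine Filter.Eventually.of_forall fun v => ?_
    have : {x : ℝ | (Fin.cons x v : Fin 5 → ℝ) ∈ {v : Fin 5 → ℝ | v 0 + v 1 + v 4 = 1 / 2}}
        ⊆ {1 / 2 - v 0 - v 3} := by
      intro x hx
      have hx : x + v 0 + v 3 = 1 / 2 := hx
      rw [Set.mem_singleton_iff]; linarith
    exact measure_mono_null this (by simp)
  · have : (fun v : Fin 4 → ℝ => volume {x : ℝ | (Fin.cons x v : Fin 5 → ℝ) ∈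
        {v : Fin 5 → ℝ | v 0 + v 1 + v 4 = 1 / 2}}) = fun _ => 0 := by
      funext v
      have : {x : ℝ | (Fin.cons x v : Fin 5 → ℝ) ∈ {v : Fin 5 → ℝ | v 0 + v 1 + v 4 = 1 / 2}}
          ⊆ {1 / 2 - v 0 - v 3} := by
        intro x hx
        have hx : x + v 0 + v 3 = 1 / 2 := hx
        rw [Set.mem_singleton_iff]; linarith
      exact measure_mono_null this (by simp)
    rw [this]
    exact aemeasurable_const

theorem lint_step {F : ℝ → ENNReal} {f : ℝ → ℝ} {a b : ℝ} (hab : a ≤ b) (hf : Continuous f)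
    (h0 : ∀ x ∈ Set.Icc a b, 0 ≤ f x) (hin : ∀ x ∈ Set.Ioo a b, F x = ENNReal.ofReal (f x))
    (hout : ∀ x ∉ Set.Icc a b, F x = 0) :
    ∫⁻ x, F x = ENNReal.ofReal (∫ x in a..b, f x) := by
  rw [intervalIntegral.integral_of_le hab, ofReal_integral_eq_lintegral_ofReal
    (hf.integrableOn_Ioc)
    ((ae_restrict_iff' measurableSet_Ioc).2 (Filter.Eventually.of_forall fun x hx =>
      h0 x ⟨hx.1.le, hx.2⟩)), ← lintegral_indicator measurableSet_Ioc]
  apply lintegral_congr_ae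
  have ha : ∀ᵐ x : ℝ, x ≠ a := by simp [ae_iff]
  have hb : ∀ᵐ x : ℝ, x ≠ b := by simp [ae_iff]
  filter_upwards [ha, hb] with x hxa hxb
  by_cases hx : x ∈ Set.Icc a b
  · have h1 : a < x := lt_of_le_of_ne hx.1 (Ne.symm hxa)
    have h2 : x < b := lt_of_le_of_ne hx.2 hxb
    rw [hin x ⟨h1, h2⟩, Set.indicator_of_mem (show x ∈ Set.Ioc a b from ⟨h1, hx.2⟩)]
  · rw [hout x hx, Set.indicator_of_notMem fun h => hx ⟨h.1.le, h.2⟩]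

theorem poly_int (c0 c1 c2 c3 c4 a b : ℝ) :
    ∫ x in a..b, (c0 + c1 * x + c2 * x ^ 2 + c3 * x ^ 3 + c4 * x ^ 4) =
      c0 * (b - a) + c1 * (b ^ 2 - a ^ 2) / 2 + c2 * (b ^ 3 - a ^ 3) / 3 +
        c3 * (b ^ 4 - a ^ 4) / 4 + c4 * (b ^ 5 - a ^ 5) / 5 := by
  have key : ∀ x ∈ Set.uIcc a b, HasDerivAt (fun x : ℝ => c0 * x + c1 / 2 * x ^ 2 + c2 / 3 * x ^ 3 +
      c3 / 4 * x ^ 4 + c4 / 5 * x ^ 5) (c0 + c1 * x + c2 * x ^ 2 + c3 * x ^ 3 + c4 * x ^ 4) x := by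
    intro x _
    have := (((((hasDerivAt_id x).const_mul c0).add ((hasDerivAt_pow 2 x).const_mul (c1 / 2))).add
      ((hasDerivAt_pow 3 x).const_mul (c2 / 3))).add ((hasDerivAt_pow 4 x).const_mul (c3 / 4))).add
      ((hasDerivAt_pow 5 x).const_mul (c4 / 5))
    refine this.congr_deriv ?_
    push_cast
    ring
  rw [intervalIntegral.integral_eq_sub_of_hasDerivAt key
    (Continuous.intervalIntegrable (by fun_prop) _ _)]
  ring

theorem vol_fin1 (S : Set ℝ) (hS : MeasurableSet S) :
    volume {v : Fin 1 → ℝ | v 0 ∈ S} = volume S := by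
  exact (volume_preserving_funUnique (Fin 1) ℝ).measure_preimage hS.nullMeasurableSet

/-- The planar slice. -/
theorem vol_plane (U W h : ℝ) (h0 : 0 ≤ h) (hU : h ≤ U) (hW : h ≤ W) :
    volume {v : Fin 2 → ℝ | 0 < v 0 ∧ v 0 < U ∧ 0 < v 1 ∧ v 1 ≤ W ∧ h < v 0 + v 1} =
      ENNReal.ofReal (U * W - h ^ 2 / 2) := by
  rw [vol_cons _ (by
    simp only [Set.ofPred_and]
    repeat' first
      | exact MeasurableSet.const _
      | exact measurableSet_lt (by fun_prop) (by fun_prop)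
      | exact measurableSet_le (by fun_prop) (by fun_prop)
      | apply MeasurableSet.inter)]
  have hsl : ∀ u : ℝ, volume {v : Fin 1 → ℝ | (Fin.cons u v : Fin 2 → ℝ) ∈
      {v : Fin 2 → ℝ | 0 < v 0 ∧ v 0 < U ∧ 0 < v 1 ∧ v 1 ≤ W ∧ h < v 0 + v 1}} =
      if 0 < u ∧ u < U then ENNReal.ofReal (W - max 0 (h - u)) else 0 := by
    intro u
    split_ifs with hu
    · rw [← Real.volume_Ioc, ← vol_fin1 _ measurableSet_Ioc]
      congr 1
      ext v
      change (0 < u ∧ u < U ∧ 0 < v 0 ∧ v 0 ≤ W ∧ h < u + v 0) ↔ max 0 (h - u) < v 0 ∧ v 0 ≤ W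
      rw [max_lt_iff]
      constructor
      · rintro ⟨_, _, h1, h2, h3⟩
        exact ⟨⟨h1, by linarith⟩, h2⟩
      · rintro ⟨⟨h1, h3⟩, h2⟩
        exact ⟨hu.1, hu.2, h1, h2, by linarith⟩
    · convert measure_empty (μ := (volume : Measure (Fin 1 → ℝ)))
      ext v
      simp only [Set.mem_empty_iff_false, iff_false]
      intro hv
      exact hu ⟨hv.1, hv.2.1⟩
  simp only [hsl]
  rw [lint_step (f := fun u => W - max 0 (h - u)) (h0.trans hU) (by fun_prop)]
  · congr 1
    rw [← intervalIntegral.integral_add_adjacent_intervals (b := h)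
      (Continuous.intervalIntegrable (by fun_prop) _ _)
      (Continuous.intervalIntegrable (by fun_prop) _ _)]
    have e1 : ∫ u in (0 : ℝ)..h, (W - max 0 (h - u)) =
        ∫ u in (0 : ℝ)..h, ((W - h) + 1 * u + 0 * u ^ 2 + 0 * u ^ 3 + 0 * u ^ 4) := by
      apply intervalIntegral.integral_congr
      intro u hu
      rw [Set.uIcc_of_le h0] at hu
      simp only
      rw [max_eq_right (by linarith [hu.2])]
      ring
    have e2 : ∫ u in h..U, (W - max 0 (h - u)) =
        ∫ u in h..U, (W + 0 * u + 0 * u ^ 2 + 0 * u ^ 3 + 0 * u ^ 4) := by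
      apply intervalIntegral.integral_congr
      intro u hu
      rw [Set.uIcc_of_le hU] at hu
      simp only
      rw [max_eq_left (by linarith [hu.1])]
      ring
    rw [e1, e2, poly_int, poly_int]
    ring
  · intro u hu
    have : max 0 (h - u) ≤ W := max_le (h0.trans hW) (by linarith [hu.1])
    linarith
  · intro u hu
    rw [if_pos ⟨hu.1, hu.2⟩]
  · intro u hu
    rw [if_neg]
    rintro ⟨h1, h2⟩
    exact hu ⟨h1.le, h2.le⟩

/-- The standard cell; `h` stands for `(1 - 4 s) / 6`. -/
def KP (s h a z u w : ℝ) : Prop :=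
  (0 < a ∧ a < s) ∧ (0 ≤ z ∧ 2 * a - s < z ∧ z < a + h) ∧
    (0 < u ∧ u < a + h + z ∧ 0 < w ∧ w ≤ 2 * (s - a) + 2 * h ∧ h < u + w)

theorem vol_three (s h a : ℝ) (hs : 0 < s) (h0 : 0 < h) (ha : 0 < a) (has : a < s) :
    volume {v : Fin 3 → ℝ | KP s h a (v 0) (v 1) (v 2)} =
      ENNReal.ofReal (∫ z in (max 0 (2 * a - s))..(a + h),
        ((a + h + z) * (2 * (s - a) + 2 * h) - h ^ 2 / 2)) := by
  rw [vol_cons _ (by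
    unfold KP
    simp only [Set.ofPred_and]
    repeat' first
      | exact MeasurableSet.const _
      | exact measurableSet_lt (by fun_prop) (by fun_prop)
      | exact measurableSet_le (by fun_prop) (by fun_prop)
      | apply MeasurableSet.inter)]
  have hm : max 0 (2 * a - s) ≤ a + h := max_le (by linarith) (by linarith)
  apply lint_step hm (by fun_prop)
  · rintro z ⟨hz, hz'⟩
    have hz0 : 0 ≤ z := (le_max_left _ _).trans hz
    nlinarith [mul_nonneg h0.le h0.le, mul_nonneg h0.le hz0, mul_nonneg h0.le ha.le,
      mul_nonneg h0.le (sub_pos.2 has).le, mul_nonneg (add_nonneg ha.le hz0) (sub_pos.2 has).le]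
  · rintro z ⟨hz, hz'⟩
    obtain ⟨hz1, hz2⟩ := max_lt_iff.1 hz
    rw [← vol_plane (a + h + z) (2 * (s - a) + 2 * h) h h0.le (by linarith) (by linarith)]
    congr 1
    ext v
    change KP s h a z (v 0) (v 1) ↔ _
    constructor
    · rintro ⟨-, -, h⟩; exact h
    · intro h; exact ⟨⟨ha, has⟩, ⟨hz1.le, hz2, hz'⟩, h⟩
  · intro z hz
    convert measure_empty (μ := (volume : Measure (Fin 2 → ℝ)))
    ext v
    simp only [Set.mem_empty_iff_false, iff_false]
    rintro ⟨-, ⟨h1, h2, h3⟩, -⟩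
    exact hz ⟨max_le h1 (le_of_lt h2), le_of_lt h3⟩

/-- Value of the previous integral. -/
noncomputable def gfun (s h a : ℝ) : ℝ :=
  ((a + h) * (2 * (s - a) + 2 * h) - h ^ 2 / 2) * (a + h - max 0 (2 * a - s)) +
    (2 * (s - a) + 2 * h) * ((a + h) ^ 2 - (max 0 (2 * a - s)) ^ 2) / 2

theorem int_three (s h a : ℝ) : (∫ z in (max 0 (2 * a - s))..(a + h),
        ((a + h + z) * (2 * (s - a) + 2 * h) - h ^ 2 / 2)) = gfun s h a := by
  have : ∀ z : ℝ, ((a + h + z) * (2 * (s - a) + 2 * h) - h ^ 2 / 2) =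
      (((a + h) * (2 * (s - a) + 2 * h) - h ^ 2 / 2) + (2 * (s - a) + 2 * h) * z + 0 * z ^ 2 +
        0 * z ^ 3 + 0 * z ^ 4) := by intro z; ring
  simp only [this]
  rw [poly_int, gfun]
  ring

theorem gfun_nonneg (s h a : ℝ) (h0 : 0 ≤ h) (ha : 0 ≤ a) (has : a ≤ s) : 0 ≤ gfun s h a := by
  rw [← int_three]
  apply intervalIntegral.integral_nonneg (max_le (by linarith) (by linarith))
  rintro z ⟨hz, hz'⟩
  have hz0 : 0 ≤ z := (le_max_left _ _).trans hz
  nlinarith [mul_nonneg h0 h0, mul_nonneg h0 hz0, mul_nonneg h0 ha,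
      mul_nonneg h0 (sub_nonneg.2 has), mul_nonneg (add_nonneg ha hz0) (sub_nonneg.2 has)]

theorem gfun_cont (s h : ℝ) : Continuous (gfun s h) := by
  unfold gfun
  fun_prop

theorem vol_four (s h : ℝ) (hs : 0 < s) (h0 : 0 < h) :
    volume {v : Fin 4 → ℝ | KP s h (v 0) (v 1) (v 2) (v 3)} =
      ENNReal.ofReal (∫ a in (0 : ℝ)..s, gfun s h a) := by
  rw [vol_cons _ (by
    unfold KP
    simp only [Set.ofPred_and]
    repeat' first
      | exact MeasurableSet.const _
      | exact measurableSet_lt (by fun_prop) (by fun_prop)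
      | exact measurableSet_le (by fun_prop) (by fun_prop)
      | apply MeasurableSet.inter)]
  apply lint_step hs.le (gfun_cont s h)
  · rintro a ⟨ha, ha'⟩
    exact gfun_nonneg s h a h0.le ha ha'
  · rintro a ⟨ha, ha'⟩
    rw [← int_three, ← vol_three s h a hs h0 ha ha']
    rfl
  · intro a ha
    convert measure_empty (μ := (volume : Measure (Fin 3 → ℝ)))
    ext v
    simp only [Set.mem_empty_iff_false, iff_false]
    rintro ⟨⟨h1, h2⟩, -⟩
    exact ha ⟨le_of_lt h1, le_of_lt h2⟩

theorem int_four (s h : ℝ) (hs : 0 ≤ s) (hh : h = (1 - 4 * s) / 6) :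
    ∫ a in (0 : ℝ)..s, gfun s h a =
      0 + 5 / 432 * s + (-1 / 32) * s ^ 2 + (-1 / 12) * s ^ 3 + 7 / 27 * s ^ 4 := by
  rw [← intervalIntegral.integral_add_adjacent_intervals (b := s / 2)
      ((gfun_cont s h).intervalIntegrable _ _) ((gfun_cont s h).intervalIntegrable _ _)]
  have e1 : ∫ a in (0 : ℝ)..(s / 2), gfun s h a = ∫ a in (0 : ℝ)..(s / 2),
      ((3 * (s + h) * h ^ 2 - h ^ 3 / 2) + (3 * (2 * (s + h) * h - h ^ 2) - h ^ 2 / 2) * a +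
        (3 * (s + h - 2 * h)) * a ^ 2 + (-3) * a ^ 3 + 0 * a ^ 4) := by
    apply intervalIntegral.integral_congr
    intro a ha
    rw [Set.uIcc_of_le (by linarith)] at ha
    simp only [gfun]
    rw [max_eq_left (by linarith [ha.2])]
    ring
  have e2 : ∫ a in (s / 2)..s, gfun s h a = ∫ a in (s / 2)..s,
      (((s + h) ^ 2 * (3 * h - s) - h ^ 2 * (s + h) / 2) +
        (5 * (s + h) ^ 2 - 2 * (s + h) * (3 * h - s) + h ^ 2 / 2) * a +
        (-10 * (s + h) + (3 * h - s)) * a ^ 2 + 5 * a ^ 3 + 0 * a ^ 4) := by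
    apply intervalIntegral.integral_congr
    intro a ha
    rw [Set.uIcc_of_le (by linarith)] at ha
    simp only [gfun]
    rw [max_eq_right (by linarith [ha.1])]
    ring
  rw [e1, e2, poly_int, poly_int, hh]
  ring

/-- The standard cell in dimension five. -/
def K : Set (Fin 5 → ℝ) :=
  {v | (0 < v 0 ∧ v 0 < 1 / 4) ∧ KP (v 0) ((1 - 4 * v 0) / 6) (v 1) (v 2) (v 3) (v 4)}

theorem K_meas : MeasurableSet K := by
  unfold K KP
  simp only [Set.ofPred_and]
  repeat' first
      | exact MeasurableSet.const _
      | exact measurableSet_lt (by fun_prop) (by fun_prop)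
      | exact measurableSet_le (by fun_prop) (by fun_prop)
      | apply MeasurableSet.inter

theorem vol_K : volume K = ENNReal.ofReal (31 / 184320) := by
  rw [vol_cons _ K_meas]
  rw [lint_step (a := 0) (b := 1 / 4) (f := fun s => 0 + 5 / 432 * s + (-1 / 32) * s ^ 2 +
    (-1 / 12) * s ^ 3 + 7 / 27 * s ^ 4) (by norm_num) (by fun_prop)]
  · rw [poly_int]
    norm_num
  · rintro s ⟨hs, hs'⟩
    change 0 ≤ 0 + 5 / 432 * s + (-1 / 32) * s ^ 2 + (-1 / 12) * s ^ 3 + 7 / 27 * s ^ 4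
    rw [← int_four s _ hs rfl]
    apply intervalIntegral.integral_nonneg hs
    rintro a ⟨ha, ha'⟩
    exact gfun_nonneg _ _ _ (by linarith) ha ha'
  · rintro s ⟨hs, hs'⟩
    rw [← int_four s _ hs.le rfl, ← vol_four s _ hs (by linarith)]
    congr 1
    ext v
    change ((0 < s ∧ s < 1 / 4) ∧ KP s ((1 - 4 * s) / 6) (v 0) (v 1) (v 2) (v 3)) ↔
      KP s ((1 - 4 * s) / 6) (v 0) (v 1) (v 2) (v 3)
    exact ⟨fun h => h.2, fun h => ⟨⟨hs, hs'⟩, h⟩⟩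
  · intro s hs
    convert measure_empty (μ := (volume : Measure (Fin 4 → ℝ)))
    ext v
    simp only [Set.mem_empty_iff_false, iff_false]
    rintro ⟨⟨h1, h2⟩, -⟩
    exact hs ⟨le_of_lt h1, le_of_lt h2⟩

theorem vol_affine (M : Matrix (Fin 5) (Fin 5) ℝ) (c : Fin 5 → ℝ) (hM : M.det ≠ 0)
    (S : Set (Fin 5 → ℝ)) :
    volume ((fun v => M.mulVec v + c) ⁻¹' S) = ENNReal.ofReal |M.det⁻¹| * volume S := by
  have h1 : (fun v => M.mulVec v + c) ⁻¹' S = (Matrix.toLin' M) ⁻¹' ((fun v => v + c) ⁻¹' S) := rfl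
  rw [h1, Measure.addHaar_preimage_linearMap _ (by rwa [LinearMap.det_toLin']),
    LinearMap.det_toLin', measure_preimage_add_right]

/-- The coordinates of `profOf v` adapted to the cell `K`. -/
def coords (v : Fin 5 → ℝ) : Fin 5 → ℝ :=
  ![3 * (v 0 + v 1 + v 2 + v 3) - 2, 2 * (v 0 + v 1) + (v 2 + v 3) - 1,
    1 - (v 0 + v 1 + v 2 + v 3 + v 4), 1 - v 0 - 2 * v 2 - 2 * v 3, 1 - 2 * v 0 - 2 * v 1 - v 2]

def tAB (v : Fin 5 → ℝ) : Fin 5 → ℝ := ![v 2, v 3, v 0, v 1, 1 - (v 0 + v 1 + v 2 + v 3 + v 4)]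
def tAC (v : Fin 5 → ℝ) : Fin 5 → ℝ := ![1 - (v 0 + v 1 + v 2 + v 3 + v 4), v 4, v 3, v 2, v 1]
def tBC (v : Fin 5 → ℝ) : Fin 5 → ℝ := ![v 1, v 0, v 4, 1 - (v 0 + v 1 + v 2 + v 3 + v 4), v 2]

theorem vol_coords (S : Set (Fin 5 → ℝ)) :
    volume (coords ⁻¹' S) = ENNReal.ofReal (1 / 3) * volume S := by
  have hd : |(!![3, 3, 3, 3, 0; 2, 2, 1, 1, 0; -1, -1, -1, -1, -1; -1, 0, -2, -2, 0;
      -2, -2, -1, 0, 0] : Matrix (Fin 5) (Fin 5) ℝ).det| = 3 := by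
    simp [Matrix.det_succ_row_zero, Fin.sum_univ_succ, Fin.succAbove]
    norm_num [abs_of_pos, abs_of_neg]
  have := vol_affine _ ![-2, -1, 1, 1, 1] (by rw [← abs_pos, hd]; norm_num) S
  rw [abs_inv, hd] at this
  convert this using 2
  · congr 1
    funext v i
    fin_cases i <;> simp [coords, dotProduct, Fin.sum_univ_succ] <;> ring
  · norm_num

theorem vol_tAB (S : Set (Fin 5 → ℝ)) : volume (tAB ⁻¹' S) = volume S := by
  have hd : |(!![0, 0, 1, 0, 0; 0, 0, 0, 1, 0; 1, 0, 0, 0, 0; 0, 1, 0, 0, 0;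
      -1, -1, -1, -1, -1] : Matrix (Fin 5) (Fin 5) ℝ).det| = 1 := by
    simp [Matrix.det_succ_row_zero, Fin.sum_univ_succ, Fin.succAbove]
  have := vol_affine _ ![0, 0, 0, 0, 1] (by rw [← abs_pos, hd]; norm_num) S
  rw [abs_inv, hd] at this
  simp only [inv_one, ENNReal.ofReal_one, one_mul] at this
  rw [← this]
  congr 2
  funext v i
  fin_cases i <;> simp [tAB, dotProduct, Fin.sum_univ_succ] <;> ring

theorem vol_tAC (S : Set (Fin 5 → ℝ)) : volume (tAC ⁻¹' S) = volume S := by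
  have hd : |(!![-1, -1, -1, -1, -1; 0, 0, 0, 0, 1; 0, 0, 0, 1, 0; 0, 0, 1, 0, 0;
      0, 1, 0, 0, 0] : Matrix (Fin 5) (Fin 5) ℝ).det| = 1 := by
    simp [Matrix.det_succ_row_zero, Fin.sum_univ_succ, Fin.succAbove]
  have := vol_affine _ ![1, 0, 0, 0, 0] (by rw [← abs_pos, hd]; norm_num) S
  rw [abs_inv, hd] at this
  simp only [inv_one, ENNReal.ofReal_one, one_mul] at this
  rw [← this]
  congr 2
  funext v i
  fin_cases i <;> simp [tAC, dotProduct, Fin.sum_univ_succ] <;> ring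

theorem vol_tBC (S : Set (Fin 5 → ℝ)) : volume (tBC ⁻¹' S) = volume S := by
  have hd : |(!![0, 1, 0, 0, 0; 1, 0, 0, 0, 0; 0, 0, 0, 0, 1; -1, -1, -1, -1, -1;
      0, 0, 1, 0, 0] : Matrix (Fin 5) (Fin 5) ℝ).det| = 1 := by
    simp [Matrix.det_succ_row_zero, Fin.sum_univ_succ, Fin.succAbove]
  have := vol_affine _ ![0, 0, 0, 1, 0] (by rw [← abs_pos, hd]; norm_num) S
  rw [abs_inv, hd] at this
  simp only [inv_one, ENNReal.ofReal_one, one_mul] at this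
  rw [← this]
  congr 2
  funext v i
  fin_cases i <;> simp [tBC, dotProduct, Fin.sum_univ_succ] <;> ring

theorem profOf_tAB (v : Fin 5 → ℝ) : profOf (tAB v) = (profOf v).swapAB := by
  simp only [profOf, tAB, swapAB, Profile.mk.injEq]
  refine ⟨rfl, rfl, rfl, rfl, rfl, ?_⟩
  simp
  ring

theorem profOf_tAC (v : Fin 5 → ℝ) : profOf (tAC v) = (profOf v).swapAC := by
  simp only [profOf, tAC, swapAC, Profile.mk.injEq]
  refine ⟨rfl, rfl, rfl, rfl, rfl, ?_⟩
  simp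
  ring

theorem profOf_tBC (v : Fin 5 → ℝ) : profOf (tBC v) = (profOf v).swapBC := by
  simp only [profOf, tBC, swapBC, Profile.mk.injEq]
  refine ⟨rfl, rfl, rfl, rfl, rfl, ?_⟩
  simp
  ring

theorem Q_coords (v : Fin 5 → ℝ) : Q (profOf v) ↔ coords v ∈ K := by
  change Q (profOf v) ↔ (0 < 3 * (v 0 + v 1 + v 2 + v 3) - 2 ∧
    3 * (v 0 + v 1 + v 2 + v 3) - 2 < 1 / 4) ∧
    KP (3 * (v 0 + v 1 + v 2 + v 3) - 2) ((1 - 4 * (3 * (v 0 + v 1 + v 2 + v 3) - 2)) / 6)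
      (2 * (v 0 + v 1) + (v 2 + v 3) - 1)
      (1 - (v 0 + v 1 + v 2 + v 3 + v 4)) (1 - v 0 - 2 * v 2 - 2 * v 3)
      (1 - 2 * v 0 - 2 * v 1 - v 2)
  simp only [Q, KP, profOf, nonneg, X, Y, Z]
  generalize v 0 = a
  generalize v 1 = b
  generalize v 2 = c
  generalize v 3 = d
  generalize v 4 = e
  constructor
  · rintro ⟨⟨n1, n2, n3, n4, n5, n6⟩, h1, h2, h3, h4, h5, h6, h7, h8, h9⟩
    refine ⟨⟨?_, ?_⟩, ⟨?_, ?_⟩, ⟨?_, ?_, ?_⟩, ?_, ?_, ?_, ?_, ?_⟩ <;> linarith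
  · rintro ⟨⟨h1, h2⟩, ⟨h3, h4⟩, ⟨h5, h6, h7⟩, h8, h9, h10, h11, h12⟩
    refine ⟨⟨?_, ?_, ?_, ?_, ?_, ?_⟩, ?_, ?_, ?_, ?_, ?_, ?_, ?_, ?_, ?_⟩ <;> linarith

theorem tAB_meas : Measurable tAB := by
  refine measurable_pi_iff.2 fun i => ?_
  fin_cases i <;> simp [tAB] <;> fun_prop
theorem tAC_meas : Measurable tAC := by
  refine measurable_pi_iff.2 fun i => ?_
  fin_cases i <;> simp [tAC] <;> fun_prop
theorem tBC_meas : Measurable tBC := by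
  refine measurable_pi_iff.2 fun i => ?_
  fin_cases i <;> simp [tBC] <;> fun_prop
theorem coords_meas : Measurable coords := by
  refine measurable_pi_iff.2 fun i => ?_
  fin_cases i <;> simp [coords] <;> fun_prop

/-- The set of points where `C` is the plurality loser and the event occurs (up to ties). -/
def GS : Set (Fin 5 → ℝ) := {v | G (profOf v)}

theorem GS_eq : GS = coords ⁻¹' K ∪ tAB ⁻¹' (coords ⁻¹' K) := by
  ext v
  change G (profOf v) ↔ coords v ∈ K ∨ coords (tAB v) ∈ K
  rw [← Q_coords, ← Q_coords, profOf_tAB, G]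

theorem GS_meas : MeasurableSet GS := by
  rw [GS_eq]
  exact (coords_meas K_meas).union (tAB_meas (coords_meas K_meas))

theorem GS_vol : volume GS = ENNReal.ofReal (31 / 276480) := by
  rw [GS_eq, measure_union _ (tAB_meas (coords_meas K_meas)), vol_tAB, vol_coords, vol_K,
    ← ENNReal.ofReal_mul (by norm_num), ← ENNReal.ofReal_add (by norm_num) (by norm_num)]
  · norm_num
  · rw [Set.disjoint_left]
    intro v h1 h2
    have h1 : coords v ∈ K := h1
    have h2 : coords (tAB v) ∈ K := h2
    rw [← Q_coords] at h1 h2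
    rw [profOf_tAB] at h2
    exact Q_disj _ ⟨h1, h2⟩

/-- The tie hyperplane. -/
def TS : Set (Fin 5 → ℝ) := {v | v 0 + v 1 + v 4 = 1 / 2}

theorem tie_TS (v : Fin 5 → ℝ) (h : tie (profOf v)) : v ∈ TS := by
  simp only [tie, profOf, X, Y] at h
  change v 0 + v 1 + v 4 = 1 / 2
  linarith

theorem all_vol : volume (GS ∪ (tAC ⁻¹' GS ∪ tBC ⁻¹' GS)) = ENNReal.ofReal (31 / 92160) := by
  have d : ∀ v, v ∈ GS ↔ G (profOf v) := fun v => Iff.rfl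
  rw [measure_union _ ((tAC_meas GS_meas).union (tBC_meas GS_meas)),
    measure_union _ (tBC_meas GS_meas), vol_tAC, vol_tBC, GS_vol,
    ← ENNReal.ofReal_add (by norm_num) (by norm_num),
    ← ENNReal.ofReal_add (by norm_num) (by norm_num)]
  · norm_num
  · rw [Set.disjoint_left]
    intro v h1 h2
    rw [Set.mem_preimage, d] at h1 h2
    rw [profOf_tAC] at h1
    rw [profOf_tBC] at h2
    exact (G_disj _).2.2 ⟨h1, h2⟩
  · rw [Set.disjoint_left]
    rintro v h1 (h2 | h2)
    · rw [Set.mem_preimage, d, profOf_tAC] at h2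
      exact (G_disj _).1 ⟨h1, h2⟩
    · rw [Set.mem_preimage, d, profOf_tBC] at h2
      exact (G_disj _).2.1 ⟨h1, h2⟩

theorem mem_T_iff (v : Fin 5 → ℝ) : v ∈ T ↔ (profOf v).nonneg := by
  simp only [T, profOf, nonneg]
  constructor
  · rintro ⟨h, h'⟩
    exact ⟨h 0, h 1, h 2, h 3, h 4, by linarith⟩
  · rintro ⟨h0, h1, h2, h3, h4, h5⟩
    refine ⟨fun i => ?_, by linarith⟩
    fin_cases i <;> assumption

end volumes

theorem stmt18 :
    MeasureTheory.volume
      {v ∈ T | (∃ W : Cand, ¬ strictlySmallest W (profOf v) ∧ paradox W (profOf v)) ∧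
               (∃ W : Cand, strictlySmallest W (profOf v) ∧ paradox W (profOf v))} =
      (31 / 768) * (1 / 120 : ENNReal) := by
  have hval : (31 / 768) * (1 / 120 : ENNReal) = ENNReal.ofReal (31 / 92160) := by
    rw [show (31 / 92160 : ℝ) = (31 / 768) * (1 / 120) by norm_num,
      ENNReal.ofReal_mul (by norm_num), ENNReal.ofReal_div_of_pos (by norm_num),
      ENNReal.ofReal_div_of_pos (by norm_num)]
    norm_num
  rw [hval, ← all_vol]
  have e1 : {v ∈ T | (∃ W : Cand, ¬ strictlySmallest W (profOf v) ∧ paradox W (profOf v)) ∧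
      (∃ W : Cand, strictlySmallest W (profOf v) ∧ paradox W (profOf v))} =
      {v | (profOf v).nonneg ∧ Dbl (profOf v)} := by
    ext v
    change (v ∈ T ∧ Dbl (profOf v)) ↔ ((profOf v).nonneg ∧ Dbl (profOf v))
    rw [mem_T_iff]
  rw [e1]
  have hN : MeasureTheory.volume (TS ∪ (tAC ⁻¹' TS ∪ tBC ⁻¹' TS)) = 0 := by
    refine MeasureTheory.measure_union_null tie_null (MeasureTheory.measure_union_null ?_ ?_)
    · rw [vol_tAC]; exact tie_null
    · rw [vol_tBC]; exact tie_null
  apply le_antisymm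
  · have hsub : {v | (profOf v).nonneg ∧ Dbl (profOf v)} ⊆
        (GS ∪ (tAC ⁻¹' GS ∪ tBC ⁻¹' GS)) ∪ (TS ∪ (tAC ⁻¹' TS ∪ tBC ⁻¹' TS)) := by
      rintro v ⟨hp, hd⟩
      by_cases hv : v ∈ TS ∪ (tAC ⁻¹' TS ∪ tBC ⁻¹' TS)
      · exact Or.inr hv
      · left
        rcases dbl_mp _ hp hd (fun h => hv (Or.inl (tie_TS v h)))
          (fun h => hv (Or.inr (Or.inl (tie_TS (tAC v) (by rwa [profOf_tAC])))))
          (fun h => hv (Or.inr (Or.inr (tie_TS (tBC v) (by rwa [profOf_tBC]))))) with h | h | h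
        · exact Or.inl h
        · right; left
          change G (profOf (tAC v))
          rwa [profOf_tAC]
        · right; right
          change G (profOf (tBC v))
          rwa [profOf_tBC]
    refine (MeasureTheory.measure_mono hsub).trans ((MeasureTheory.measure_union_le _ _).trans ?_)
    rw [hN, add_zero]
  · apply MeasureTheory.measure_mono
    rintro v (h | h | h)
    · exact dbl_mpr _ (Or.inl h)
    · have h : G (profOf (tAC v)) := h
      rw [profOf_tAC] at h
      exact dbl_mpr _ (Or.inr (Or.inl h))
    · have h : G (profOf (tBC v)) := h
      rw [profOf_tBC] at h
      exact dbl_mpr _ (Or.inr (Or.inr h))
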